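/- Let f ∈ L¹(Q0). Then ‖f‖_{SJN_1(Q0)} < ∞ if and only if ∫_{Q0} |f(x) − f_{Q0}| · log(e + |f(x) − f_{Q0}|) dx < ∞; that is, SJN_1(Q0) coincides (modulo constants) with the Zygmund class L(log L)(Q0). Moreover, ‖f‖_{SJN_1(Q0)} is equivalent, up to constants depending only on n, to ‖M_{Q0}(f − f_{Q0})‖_{L^1(Q0)}, where M_{Q0} is the local dyadic Hardy–Littlewood maximal operator. -/

import Mathlib

/-!
The proof rests on the comparability `‖f‖_{SJN_1} ≈ ‖M(f - f_{Q0})‖_{L¹}`, which reduces the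
characterization by `L log L` to the classical one for the dyadic maximal function.

*Upper bound* (`sjnNorm_le`). The sets `E_Q` of a family of dyadic cubes are disjoint, and the
oscillation of `f` on `Q ∋ x` is at most twice the mean of `|f - c|` on `Q`, hence at most
`2 M(f - c)(x)`.

*Lower bound* (`lintegral_mx_le`). Starting from `Q0`, a dyadic cube becomes principal when it is
a maximal one on which the mean of `|f - f_P|` exceeds twice the oscillation on its principal
ancestor `P`. By construction the children of `P` occupy at most half of `P` (`prin_sparse`), and
telescoping `f_P - f_{Q0}` along the principal cubes through `x`, with one factor `2 ^ n` lost in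
passing from the parent of a principal cube to the cube itself, gives
`M(f - f_{Q0})(x) ≤ 2 ^ (n + 1) ∑_{Q ∋ x} osc(Q)` (`mx_le`). In the integral of the right-hand side
`|Q|` may be replaced by `2 |E_Q|`, by sparsity.

*The Zygmund class* (`mx_finite_of_log`, `log_finite_of_mx`). The maximal cubes of the level sets
`{M > t}` give the weak-type bound and its converse for `t` above the mean over `Q0`; the converse
uses Lebesgue differentiation along dyadic cubes (`ae_le_mx`). Summing both over `t = 2 ^ k`, as a
discrete layer-cake formula, gives the equivalence, because the number of `k` with `2 ^ k < a`
grows like `log a`.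
-/

open MeasureTheory ENNReal Set

noncomputable section

namespace SparseBrudnyi

/-- An axis-parallel cube in `ℝⁿ`, given by its lower corner and (positive) side length. -/
structure Cube (n : ℕ) where
  corner : Fin n → ℝ
  side : ℝ
  side_pos : 0 < side

namespace Cube

/-- The (half-open) cube, as a subset of `ℝⁿ`. -/
def toSet {n : ℕ} (Q : Cube n) : Set (Fin n → ℝ) :=
  Set.univ.pi fun i => Set.Ico (Q.corner i) (Q.corner i + Q.side)

/-- The open interior of a cube. -/
def inter {n : ℕ} (Q : Cube n) : Set (Fin n → ℝ) :=
  Set.univ.pi fun i => Set.Ioo (Q.corner i) (Q.corner i + Q.side)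

/-- The Lebesgue measure `|Q|` of a cube. -/
def vol {n : ℕ} (Q : Cube n) : ℝ≥0∞ := volume Q.toSet

end Cube

variable {n : ℕ}

/-- `Q` is a dyadic subcube of `Q0`, i.e. obtained from `Q0` by `m` successive bisections. -/
def IsDyadicSubcube (Q0 Q : Cube n) : Prop :=
  ∃ m : ℕ, ∃ j : Fin n → ℕ, (∀ i, j i < 2 ^ m) ∧
    Q.side = Q0.side / 2 ^ m ∧
    ∀ i, Q.corner i = Q0.corner i + (j i : ℝ) * Q0.side / 2 ^ m

/-- `Ch_S(Q)`: the maximal (w.r.t. inclusion) cubes of `S` strictly contained in `Q`. -/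
def sparseChildren (S : Set (Cube n)) (Q : Cube n) : Set (Cube n) :=
  {Q' | Q' ∈ S ∧ Q'.toSet ⊂ Q.toSet ∧
    ∀ Q'' ∈ S, Q''.toSet ⊂ Q.toSet → Q'.toSet ⊆ Q''.toSet → Q''.toSet ⊆ Q'.toSet}

/-- `E_Q = Q \ ⋃_{Q' ∈ Ch_S(Q)} Q'`. -/
def core (S : Set (Cube n)) (Q : Cube n) : Set (Fin n → ℝ) :=
  Q.toSet \ ⋃ Q' ∈ sparseChildren S Q, Cube.toSet Q'

/-- A sparse family of dyadic subcubes of `Q0`: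
`Σ_{Q' ∈ Ch_S(Q)} |Q'| ≤ (1/2)|Q|` for all `Q ∈ S`. -/
def IsSparse (Q0 : Cube n) (S : Set (Cube n)) : Prop :=
  S.Countable ∧ (∀ Q ∈ S, IsDyadicSubcube Q0 Q) ∧
    ∀ Q ∈ S, (∑' Q' : sparseChildren S Q, Cube.vol Q'.1) ≤ (1 / 2) * Q.vol

/-- A family sparse of order `lam`:
`Σ_{Q' ∈ Ch_S(Q)} |Q'|^lam ≤ (1/2)|Q|^lam` for all `Q ∈ S`. -/
def IsSparseOfOrder (Q0 : Cube n) (lam : ℝ) (S : Set (Cube n)) : Prop :=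
  S.Countable ∧ (∀ Q ∈ S, IsDyadicSubcube Q0 Q) ∧
    ∀ Q ∈ S, (∑' Q' : sparseChildren S Q, Cube.vol Q'.1 ^ lam) ≤ (1 / 2) * Q.vol ^ lam

/-- The average `f_Q = (1/|Q|) ∫_Q f`. -/
def cubeAvg (Q : Cube n) (f : (Fin n → ℝ) → ℝ) : ℝ :=
  ⨍ x in Q.toSet, f x

/-- The mean oscillation `(1/|Q|) ∫_Q |f - f_Q|`, as an extended nonnegative real. -/
def osc (Q : Cube n) (f : (Fin n → ℝ) → ℝ) : ℝ≥0∞ :=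
  Q.vol⁻¹ * ∫⁻ x in Q.toSet, ‖f x - cubeAvg Q f‖₊

/-- The sparse John–Nirenberg functional `‖f‖_{SJN_p(Q0)}`. -/
def sjnNorm (Q0 : Cube n) (p : ℝ) (f : (Fin n → ℝ) → ℝ) : ℝ≥0∞ :=
  ⨆ (S : Set (Cube n)) (_ : IsSparse Q0 S),
    (∫⁻ x in Q0.toSet,
      (∑' Q : S, (core S Q.1).indicator (fun _ => osc Q.1 f) x) ^ p) ^ (1 / p)

/-- Best approximation error `E_k(f;Q)_q` by polynomials of degree at most `k-1` in `L^q(Q)`. -/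
def polErr (k : ℕ) (q : ℝ) (f : (Fin n → ℝ) → ℝ) (Q : Cube n) : ℝ≥0∞ :=
  ⨅ (m : MvPolynomial (Fin n) ℝ) (_ : m.totalDegree < k),
    eLpNorm (fun x => f x - MvPolynomial.eval x m) (ENNReal.ofReal q)
      (volume.restrict Q.toSet)

/-- The sparse Brudnyi functional `‖f‖_{SV^{k,λ}_{p,q}(Q0)}`. -/
def svNorm (Q0 : Cube n) (k : ℕ) (lam p q : ℝ) (f : (Fin n → ℝ) → ℝ) : ℝ≥0∞ :=
  ⨆ (S : Set (Cube n)) (_ : IsSparse Q0 S),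
    (∫⁻ x in Q0.toSet,
      (∑' Q : S, (core S Q.1).indicator
        (fun _ => Cube.vol Q.1 ^ (lam / (n * q) - 1 / q) * polErr k q f Q.1) x) ^ p) ^ (1 / p)

/-- The fractional sparse Brudnyi functional `‖f‖_{S̃V^{k,λ}_{p,q}(Q0)}`, where the supremum
runs over families sparse of order `1 - λ/n`. -/
def svNormFrac (Q0 : Cube n) (k : ℕ) (lam p q : ℝ) (f : (Fin n → ℝ) → ℝ) : ℝ≥0∞ :=
  ⨆ (S : Set (Cube n)) (_ : IsSparseOfOrder Q0 (1 - lam / n) S),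
    (∫⁻ x in Q0.toSet,
      (∑' Q : S, (core S Q.1).indicator
        (fun _ => Cube.vol Q.1 ^ (lam / (n * q) - 1 / q) * polErr k q f Q.1) x) ^ p) ^ (1 / p)

/-- The dyadic local fractional maximal operator `M_{q,λ,Q0}`. -/
def fracMax (Q0 : Cube n) (q lam : ℝ) (f : (Fin n → ℝ) → ℝ) (x : Fin n → ℝ) : ℝ≥0∞ :=
  ⨆ (Q : Cube n) (_ : IsDyadicSubcube Q0 Q) (_ : x ∈ Q.toSet),
    (Q.vol ^ (lam / n - 1) * ∫⁻ y in Q.toSet, (‖f y‖₊ : ℝ≥0∞) ^ q) ^ (1 / q)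

/-- The BMO seminorm over all subcubes of `Q0`. -/
def bmoNorm (Q0 : Cube n) (f : (Fin n → ℝ) → ℝ) : ℝ≥0∞ :=
  ⨆ (Q : Cube n) (_ : Q.toSet ⊆ Q0.toSet), osc Q f

/-- A packing of `Q0`: a countable family of subcubes with pairwise disjoint interiors. -/
def IsPacking (Q0 : Cube n) (P : Set (Cube n)) : Prop :=
  P.Countable ∧ (∀ Q ∈ P, Q.toSet ⊆ Q0.toSet) ∧
    P.Pairwise fun Q Q' => Disjoint Q.inter Q'.inter

/-- The John–Nirenberg functional `‖f‖_{JN_p(Q0)}`. -/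
def jnNorm (Q0 : Cube n) (p : ℝ) (f : (Fin n → ℝ) → ℝ) : ℝ≥0∞ :=
  ⨆ (P : Set (Cube n)) (_ : IsPacking Q0 P),
    (∑' Q : P, osc Q.1 f ^ p * Cube.vol Q.1) ^ (1 / p)

/-- The Garsia–Rodemich functional `‖f‖_{GaRo_{L(p,∞)}(Q0)}` (written via `p'`). -/
def garoNorm (Q0 : Cube n) (p' : ℝ) (f : (Fin n → ℝ) → ℝ) : ℝ≥0∞ :=
  ⨆ (P : Set (Cube n)) (_ : IsPacking Q0 P),
    (∑' Q : P, ∫⁻ x in (Q.1 : Cube n).toSet, ‖f x - cubeAvg Q.1 f‖₊) /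
      (∑' Q : P, Cube.vol Q.1) ^ (1 / p')


/-! ### Dyadic cubes through a point -/

/-- Index, at level `m` and along each axis, of the dyadic subcube of `Q0` that contains `x`. -/
def idx (Q0 : Cube n) (m : ℕ) (x : Fin n → ℝ) : Fin n → ℕ :=
  fun i => ⌊(x i - Q0.corner i) * 2 ^ m / Q0.side⌋₊

/-- The dyadic subcube of `Q0` of level `m` that contains `x`; meaningful for `x ∈ Q0`. Indexing
dyadic cubes by their points turns statements about ancestors into statements about levels. -/
def dy (Q0 : Cube n) (m : ℕ) (x : Fin n → ℝ) : Cube n where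
  corner := fun i => Q0.corner i + (idx Q0 m x i : ℝ) * Q0.side / 2 ^ m
  side := Q0.side / 2 ^ m
  side_pos := div_pos Q0.side_pos (by positivity)

lemma mem_toSet {Q : Cube n} {x : Fin n → ℝ} :
    x ∈ Q.toSet ↔ ∀ i, Q.corner i ≤ x i ∧ x i < Q.corner i + Q.side := by
  simp [Cube.toSet, Set.mem_pi]

lemma aux_floor {c s y : ℝ} (hs : 0 < s) (hy : c ≤ y) (m j : ℕ) :
    (c + (j : ℝ) * s / 2 ^ m ≤ y ∧ y < c + (j : ℝ) * s / 2 ^ m + s / 2 ^ m) ↔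
      ⌊(y - c) * 2 ^ m / s⌋₊ = j := by
  have h2 : (0 : ℝ) < 2 ^ m := by positivity
  rw [Nat.floor_eq_iff (by have := sub_nonneg.2 hy; positivity), le_div_iff₀ hs, div_lt_iff₀ hs]
  have e1 : (c + (j : ℝ) * s / 2 ^ m ≤ y) ↔ (j : ℝ) * s ≤ (y - c) * 2 ^ m := by
    rw [← le_sub_iff_add_le', div_le_iff₀ h2]
  have e2 : (y < c + (j : ℝ) * s / 2 ^ m + s / 2 ^ m) ↔ (y - c) * 2 ^ m < ((j : ℝ) + 1) * s := by
    rw [add_assoc, ← add_div, ← sub_lt_iff_lt_add', lt_div_iff₀ h2]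
    ring_nf
  rw [e1, e2]

lemma idx_lt {Q0 : Cube n} {x : Fin n → ℝ} (hx : x ∈ Q0.toSet) (m : ℕ) (i : Fin n) :
    idx Q0 m x i < 2 ^ m := by
  have h := mem_toSet.1 hx i
  have hs := Q0.side_pos
  have h0 : 0 ≤ x i - Q0.corner i := by linarith
  have : (x i - Q0.corner i) * 2 ^ m / Q0.side < 2 ^ m := by
    rw [div_lt_iff₀ hs, mul_comm]
    have : x i - Q0.corner i < Q0.side := by linarith
    gcongr
  unfold idx
  rw [Nat.floor_lt (by positivity)]
  exact_mod_cast this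

/-- A dyadic cube with admissible indices is the set of points of `Q0` with these indices. -/
lemma mem_of_dyadic {Q0 Q : Cube n} {m : ℕ} {j : Fin n → ℕ} (hj : ∀ i, j i < 2 ^ m)
    (hs : Q.side = Q0.side / 2 ^ m)
    (hc : ∀ i, Q.corner i = Q0.corner i + (j i : ℝ) * Q0.side / 2 ^ m) (y : Fin n → ℝ) :
    y ∈ Q.toSet ↔ y ∈ Q0.toSet ∧ idx Q0 m y = j := by
  have hpos := Q0.side_pos
  constructor
  · intro h
    have h1 : ∀ i, Q0.corner i ≤ y i := by
      intro i
      have := (mem_toSet.1 h i).1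
      rw [hc] at this
      have : 0 ≤ (j i : ℝ) * Q0.side / 2 ^ m := by positivity
      linarith
    have h2 : ∀ i, idx Q0 m y i = j i := by
      intro i
      have := mem_toSet.1 h i
      rw [hc, hs] at this
      exact (aux_floor hpos (h1 i) m (j i)).1 this
    refine ⟨mem_toSet.2 fun i => ⟨h1 i, ?_⟩, funext h2⟩
    have h3 := (mem_toSet.1 h i).2
    rw [hc, hs] at h3
    have h4 : (j i : ℝ) + 1 ≤ 2 ^ m := by exact_mod_cast hj i
    have h5 : ((j i : ℝ) + 1) * Q0.side / 2 ^ m ≤ Q0.side := by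
      rw [div_le_iff₀ (by positivity), mul_comm]
      gcongr
    have h6 : ((j i : ℝ) + 1) * Q0.side / 2 ^ m
      = (j i : ℝ) * Q0.side / 2 ^ m + Q0.side / 2 ^ m := by ring
    linarith
  · rintro ⟨h0, rfl⟩
    refine mem_toSet.2 fun i => ?_
    rw [hc, hs]
    exact (aux_floor hpos (mem_toSet.1 h0 i).1 m _).2 rfl

lemma isDyadic_dy {Q0 : Cube n} {x : Fin n → ℝ} (hx : x ∈ Q0.toSet) (m : ℕ) :
    IsDyadicSubcube Q0 (dy Q0 m x) :=
  ⟨m, idx Q0 m x, idx_lt hx m, rfl, fun _ => rfl⟩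

lemma mem_dy_iff {Q0 : Cube n} {x : Fin n → ℝ} (hx : x ∈ Q0.toSet) {m : ℕ} {y : Fin n → ℝ} :
    y ∈ (dy Q0 m x).toSet ↔ y ∈ Q0.toSet ∧ idx Q0 m y = idx Q0 m x :=
  mem_of_dyadic (idx_lt hx m) rfl (fun _ => rfl) y

lemma mem_dy_self {Q0 : Cube n} {x : Fin n → ℝ} (hx : x ∈ Q0.toSet) (m : ℕ) :
    x ∈ (dy Q0 m x).toSet := (mem_dy_iff hx).2 ⟨hx, rfl⟩

lemma dy_subset {Q0 : Cube n} {x : Fin n → ℝ} (hx : x ∈ Q0.toSet) (m : ℕ) :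
    (dy Q0 m x).toSet ⊆ Q0.toSet := fun _ hy => ((mem_dy_iff hx).1 hy).1

lemma dy_eq_of_idx {Q0 : Cube n} {m : ℕ} {x y : Fin n → ℝ} (h : idx Q0 m y = idx Q0 m x) :
    dy Q0 m y = dy Q0 m x := by
  simp only [dy, h]

lemma dy_eq {Q0 : Cube n} {x : Fin n → ℝ} (hx : x ∈ Q0.toSet) {m : ℕ} {y : Fin n → ℝ}
    (hy : y ∈ (dy Q0 m x).toSet) : dy Q0 m y = dy Q0 m x :=
  dy_eq_of_idx ((mem_dy_iff hx).1 hy).2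

lemma idx_succ (Q0 : Cube n) (m : ℕ) (x : Fin n → ℝ) (i : Fin n) :
    idx Q0 m x i = idx Q0 (m + 1) x i / 2 := by
  have : (x i - Q0.corner i) * 2 ^ m / Q0.side
      = ((x i - Q0.corner i) * 2 ^ (m + 1) / Q0.side) / (2 : ℕ) := by
    push_cast; ring
  unfold idx
  rw [this, Nat.floor_div_natCast]

lemma idx_mono {Q0 : Cube n} {k m : ℕ} (hkm : k ≤ m) {x y : Fin n → ℝ}
    (h : idx Q0 m y = idx Q0 m x) : idx Q0 k y = idx Q0 k x := by
  induction m, hkm using Nat.le_induction with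
  | base => exact h
  | succ m _ ih =>
    apply ih
    funext i
    rw [idx_succ Q0 m, idx_succ Q0 m, h]

lemma dy_anti {Q0 : Cube n} {x : Fin n → ℝ} (hx : x ∈ Q0.toSet) {k m : ℕ} (hkm : k ≤ m) :
    (dy Q0 m x).toSet ⊆ (dy Q0 k x).toSet := fun y hy => by
  rw [mem_dy_iff hx] at hy ⊢
  exact ⟨hy.1, idx_mono hkm hy.2⟩

lemma dy_eq_of_le {Q0 : Cube n} {x y : Fin n → ℝ} (hx : x ∈ Q0.toSet) {k m : ℕ} (hkm : k ≤ m)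
    (hy : y ∈ (dy Q0 m x).toSet) : dy Q0 k y = dy Q0 k x :=
  dy_eq hx (dy_anti hx hkm hy)

lemma dy_zero {Q0 : Cube n} {x : Fin n → ℝ} (hx : x ∈ Q0.toSet) : dy Q0 0 x = Q0 := by
  have h : idx Q0 0 x = 0 := by
    funext i
    simpa using idx_lt hx 0 i
  cases Q0
  simp [dy, h]

lemma eq_dy_of_isDyadic {Q0 Q : Cube n} (h : IsDyadicSubcube Q0 Q) {x : Fin n → ℝ}
    (hx : x ∈ Q.toSet) : x ∈ Q0.toSet ∧ ∃ m, Q = dy Q0 m x := by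
  obtain ⟨m, j, hj, hs, hc⟩ := h
  obtain ⟨h0, rfl⟩ := (mem_of_dyadic hj hs hc x).1 hx
  refine ⟨h0, m, ?_⟩
  cases Q
  simp only [dy, Cube.mk.injEq]
  exact ⟨funext hc, hs⟩

lemma cube_nonempty (Q : Cube n) : Q.toSet.Nonempty :=
  ⟨Q.corner, mem_toSet.2 fun i => ⟨le_rfl, by linarith [Q.side_pos]⟩⟩

lemma measurableSet_toSet (Q : Cube n) : MeasurableSet Q.toSet :=
  MeasurableSet.univ_pi fun _ => measurableSet_Ico

lemma vol_eq (Q : Cube n) : Q.vol = ENNReal.ofReal Q.side ^ n := by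
  unfold Cube.vol Cube.toSet
  rw [volume_pi_pi]
  simp [Real.volume_Ico]

lemma vol_ne_zero (Q : Cube n) : Q.vol ≠ 0 := by
  rw [vol_eq]
  exact pow_ne_zero _ (by simpa using Q.side_pos)

lemma vol_ne_top (Q : Cube n) : Q.vol ≠ ∞ := by
  rw [vol_eq]
  exact ENNReal.pow_ne_top ENNReal.ofReal_ne_top

lemma vol_dy_succ (Q0 : Cube n) (m : ℕ) (x : Fin n → ℝ) :
    (dy Q0 m x).vol = 2 ^ n * (dy Q0 (m + 1) x).vol := by
  rw [vol_eq, vol_eq, ← mul_pow]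
  congr 1
  rw [show (2 : ℝ≥0∞) = ENNReal.ofReal 2 by simp, ← ENNReal.ofReal_mul (by norm_num)]
  congr 1
  simp only [dy, pow_succ]
  field_simp

lemma side_dy_lt {Q0 : Cube n} {k m : ℕ} (h : k < m) (x y : Fin n → ℝ) :
    (dy Q0 m y).side < (dy Q0 k x).side := by
  simp only [dy]
  have := Q0.side_pos
  gcongr
  norm_num

lemma level_eq {Q0 : Cube n} {k m : ℕ} {x y : Fin n → ℝ} (h : dy Q0 k x = dy Q0 m y) : k = m := by
  rcases lt_trichotomy k m with hlt | h1 | hlt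
  · exact absurd (congrArg Cube.side h) (side_dy_lt hlt x y).ne'
  · exact h1
  · exact absurd (congrArg Cube.side h) (side_dy_lt hlt y x).ne

lemma level_le (hn : 0 < n) {Q0 : Cube n} {k m : ℕ} {x y : Fin n → ℝ}
    (h : (dy Q0 m y).toSet ⊆ (dy Q0 k x).toSet) : k ≤ m := by
  by_contra! hlt
  have h1 : (dy Q0 m y).vol ≤ (dy Q0 k x).vol := measure_mono h
  have h2 := side_dy_lt (Q0 := Q0) hlt y x
  rw [vol_eq, vol_eq, ENNReal.pow_le_pow_left_iff hn.ne',
    ENNReal.ofReal_le_ofReal_iff (dy Q0 k x).side_pos.le] at h1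
  linarith

/-- Two dyadic cubes that are equal as sets are equal: the level is read off from the volume,
which needs `0 < n`. -/
lemma dy_inj (hn : 0 < n) {Q0 : Cube n} {k m : ℕ} {x y : Fin n → ℝ} (hx : x ∈ Q0.toSet)
    (hy : y ∈ Q0.toSet)
    (h : (dy Q0 k x).toSet = (dy Q0 m y).toSet) : dy Q0 k x = dy Q0 m y := by
  obtain rfl : k = m := le_antisymm (level_le hn h.symm.subset) (level_le hn h.subset)
  exact dy_eq hy (h ▸ mem_dy_self hx k)

lemma countable_dyadic (Q0 : Cube n) : {Q | IsDyadicSubcube Q0 Q}.Countable := by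
  refine (Set.countable_range (fun p : ℕ × (Fin n → ℕ) =>
    (⟨fun i => Q0.corner i + (p.2 i : ℝ) * Q0.side / 2 ^ p.1, Q0.side / 2 ^ p.1,
      div_pos Q0.side_pos (by positivity)⟩ : Cube n))).mono ?_
  rintro Q ⟨m, j, -, hs, hc⟩
  refine ⟨(m, j), ?_⟩
  cases Q
  simp only [Cube.mk.injEq]
  exact ⟨(funext hc).symm, hs.symm⟩

/-- If the cubes `dy Q0 (N x) x`, `x ∈ A`, partition `A` (which is what a stopping level `N`
gives), an inequality of integrals on each of them adds up to one on `A`. -/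
lemma lintegral_le_of_level {Q0 : Cube n} {A : Set (Fin n → ℝ)} {N : (Fin n → ℝ) → ℕ}
    (hA : A ⊆ Q0.toSet) (hN : ∀ x ∈ A, ∀ y ∈ (dy Q0 (N x) x).toSet, y ∈ A ∧ N y = N x)
    {h₁ h₂ : (Fin n → ℝ) → ℝ≥0∞}
    (h : ∀ x ∈ A, ∫⁻ y in (dy Q0 (N x) x).toSet, h₁ y ≤ ∫⁻ y in (dy Q0 (N x) x).toSet, h₂ y) :
    MeasurableSet A ∧ ∫⁻ y in A, h₁ y ≤ ∫⁻ y in A, h₂ y := by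
  set T : Set (Cube n) := (fun x => dy Q0 (N x) x) '' A with hT
  have hTc : T.Countable := by
    refine (countable_dyadic Q0).mono ?_
    rintro _ ⟨x, hx, rfl⟩
    exact isDyadic_dy (hA hx) _
  have hU : A = ⋃ Q ∈ T, Q.toSet := by
    ext y
    simp only [hT, mem_iUnion, mem_image, exists_prop]
    constructor
    · intro hy
      exact ⟨_, ⟨y, hy, rfl⟩, mem_dy_self (hA hy) _⟩
    · rintro ⟨_, ⟨x, hx, rfl⟩, hy⟩
      exact (hN x hx y hy).1
  have hd : T.PairwiseDisjoint Cube.toSet := by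
    rintro _ ⟨x, hx, rfl⟩ _ ⟨y, hy, rfl⟩ hne
    rw [Function.onFun, Set.disjoint_left]
    intro z hzx hzy
    apply hne
    simp only
    rw [← dy_eq (hA hx) hzx, ← dy_eq (hA hy) hzy, ← (hN x hx z hzx).2, ← (hN y hy z hzy).2]
  refine ⟨hU ▸ MeasurableSet.biUnion hTc fun Q _ => measurableSet_toSet Q, ?_⟩
  rw [hU, lintegral_biUnion hTc (fun Q _ => measurableSet_toSet Q) hd,
    lintegral_biUnion hTc (fun Q _ => measurableSet_toSet Q) hd]
  refine ENNReal.tsum_le_tsum ?_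
  rintro ⟨_, x, hx, rfl⟩
  exact h x hx

/-! ### Averages and the dyadic maximal function -/

/-- The mean `(1/|Q|) ∫_Q |f - c|`. -/
def av (Q : Cube n) (f : (Fin n → ℝ) → ℝ) (c : ℝ) : ℝ≥0∞ :=
  Q.vol⁻¹ * ∫⁻ x in Q.toSet, ‖f x - c‖ₑ

lemma osc_eq_av (Q : Cube n) (f : (Fin n → ℝ) → ℝ) : osc Q f = av Q f (cubeAvg Q f) := rfl

lemma av_mul_vol (Q : Cube n) (f : (Fin n → ℝ) → ℝ) (c : ℝ) :
    av Q f c * Q.vol = ∫⁻ x in Q.toSet, ‖f x - c‖ₑ := by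
  rw [av, mul_comm, ← mul_assoc, ENNReal.mul_inv_cancel (vol_ne_zero Q) (vol_ne_top Q), one_mul]

lemma av_le_add (Q : Cube n) (f : (Fin n → ℝ) → ℝ) (c d : ℝ) :
    av Q f c ≤ ‖d - c‖ₑ + av Q f d := by
  have h : ∫⁻ x in Q.toSet, ‖f x - c‖ₑ
      ≤ ‖d - c‖ₑ * Q.vol + ∫⁻ x in Q.toSet, ‖f x - d‖ₑ := by
    calc ∫⁻ x in Q.toSet, ‖f x - c‖ₑ
        ≤ ∫⁻ x in Q.toSet, (‖d - c‖ₑ + ‖f x - d‖ₑ) := by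
          refine lintegral_mono fun x => ?_
          calc ‖f x - c‖ₑ = ‖(d - c) + (f x - d)‖ₑ := by ring_nf
            _ ≤ _ := enorm_add_le _ _
      _ = _ := by
          rw [lintegral_add_left measurable_const, setLIntegral_const]; rfl
  calc av Q f c ≤ Q.vol⁻¹ * (‖d - c‖ₑ * Q.vol + ∫⁻ x in Q.toSet, ‖f x - d‖ₑ) := by
        unfold av; gcongr
    _ = ‖d - c‖ₑ * (Q.vol⁻¹ * Q.vol) + av Q f d := by unfold av; ring
    _ = _ := by rw [ENNReal.inv_mul_cancel (vol_ne_zero Q) (vol_ne_top Q), mul_one]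

lemma integrableOn_sub {Q : Cube n} {f : (Fin n → ℝ) → ℝ} (hf : IntegrableOn f Q.toSet) (c : ℝ) :
    IntegrableOn (fun x => f x - c) Q.toSet :=
  hf.sub (integrableOn_const (vol_ne_top Q))

lemma enorm_cubeAvg_sub_le {Q : Cube n} {f : (Fin n → ℝ) → ℝ} (hf : IntegrableOn f Q.toSet)
    (c : ℝ) : ‖cubeAvg Q f - c‖ₑ ≤ av Q f c := by
  have hv : (volume.real Q.toSet) ≠ 0 :=
    (ENNReal.toReal_pos (vol_ne_zero Q) (vol_ne_top Q)).ne'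
  have h : cubeAvg Q f - c = (volume.real Q.toSet)⁻¹ * ∫ x in Q.toSet, (f x - c) := by
    rw [integral_sub hf (integrableOn_const (vol_ne_top Q)), setIntegral_const, cubeAvg,
      setAverage_eq, smul_eq_mul, smul_eq_mul]
    field_simp
  rw [h, enorm_mul, av]
  gcongr
  · rw [enorm_inv hv, Measure.real, Real.enorm_eq_ofReal ENNReal.toReal_nonneg,
      ENNReal.ofReal_toReal (show volume Q.toSet ≠ ∞ from vol_ne_top Q)]
    rfl
  · exact enorm_integral_le_lintegral_enorm _

lemma osc_le_two_mul {Q : Cube n} {f : (Fin n → ℝ) → ℝ} (hf : IntegrableOn f Q.toSet)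
    (c : ℝ) : osc Q f ≤ 2 * av Q f c := by
  rw [osc_eq_av, two_mul]
  refine (av_le_add Q f _ c).trans ?_
  gcongr
  rw [enorm_sub_rev]
  exact enorm_cubeAvg_sub_le hf c

lemma lintegral_enorm_ne_top {Q : Cube n} {f : (Fin n → ℝ) → ℝ} (hf : IntegrableOn f Q.toSet)
    (c : ℝ) : ∫⁻ x in Q.toSet, ‖f x - c‖ₑ ≠ ∞ :=
  (integrableOn_sub hf c).hasFiniteIntegral.ne

lemma av_ne_top {Q : Cube n} {f : (Fin n → ℝ) → ℝ} (hf : IntegrableOn f Q.toSet)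
    (c : ℝ) : av Q f c ≠ ∞ :=
  ENNReal.mul_ne_top (ENNReal.inv_ne_top.2 (vol_ne_zero Q)) (lintegral_enorm_ne_top hf c)

/-- Passing to a dyadic child multiplies a mean by at most `2 ^ n`. -/
lemma av_dy_succ_le {Q0 : Cube n} {x : Fin n → ℝ} (hx : x ∈ Q0.toSet) (m : ℕ)
    (f : (Fin n → ℝ) → ℝ) (c : ℝ) :
    av (dy Q0 (m + 1) x) f c ≤ 2 ^ n * av (dy Q0 m x) f c := by
  have h : (dy Q0 (m + 1) x).vol⁻¹ = 2 ^ n * (dy Q0 m x).vol⁻¹ := by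
    rw [vol_dy_succ Q0 m, ENNReal.mul_inv (by simp) (by simp), ← mul_assoc,
      ENNReal.mul_inv_cancel (by simp) (by simp), one_mul]
  rw [av, av, h, mul_assoc]
  gcongr
  exact dy_anti hx (Nat.le_succ m)

/-- The dyadic maximal function of `f - c` at `x`, as a supremum over levels. -/
def mx (Q0 : Cube n) (f : (Fin n → ℝ) → ℝ) (c : ℝ) (x : Fin n → ℝ) : ℝ≥0∞ :=
  ⨆ m, av (dy Q0 m x) f c

lemma fracMax_eq_mx {Q0 : Cube n} (f : (Fin n → ℝ) → ℝ) (c : ℝ) {x : Fin n → ℝ}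
    (hx : x ∈ Q0.toSet) : fracMax Q0 1 0 (fun y => f y - c) x = mx Q0 f c x := by
  have key : ∀ Q : Cube n, (Q.vol ^ ((0 : ℝ) / n - 1) *
      ∫⁻ y in Q.toSet, (‖f y - c‖₊ : ℝ≥0∞) ^ (1 : ℝ)) ^ (1 / (1 : ℝ)) = av Q f c := by
    intro Q
    simp only [zero_div, zero_sub, ENNReal.rpow_neg_one, ENNReal.rpow_one, div_one, av,
      enorm_eq_nnnorm]
  unfold fracMax mx
  simp only [key]
  apply le_antisymm
  · refine iSup_le fun Q => iSup_le fun hQ => iSup_le fun hxQ => ?_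
    obtain ⟨-, m, rfl⟩ := eq_dy_of_isDyadic hQ hxQ
    exact le_iSup (fun m => av (dy Q0 m x) f c) m
  · exact iSup_le fun m => le_iSup_of_le (dy Q0 m x) <| le_iSup_of_le (isDyadic_dy hx m) <|
      le_iSup_of_le (mem_dy_self hx m) le_rfl

lemma lintegral_fracMax (Q0 : Cube n) (f : (Fin n → ℝ) → ℝ) (c : ℝ) :
    ∫⁻ x in Q0.toSet, fracMax Q0 1 0 (fun y => f y - c) x = ∫⁻ x in Q0.toSet, mx Q0 f c x :=
  setLIntegral_congr_fun (measurableSet_toSet Q0) fun _ hx => fracMax_eq_mx f c hx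

lemma sjnNorm_one (Q0 : Cube n) (f : (Fin n → ℝ) → ℝ) :
    sjnNorm Q0 1 f = ⨆ (S : Set (Cube n)) (_ : IsSparse Q0 S),
      ∫⁻ x in Q0.toSet, ∑' Q : S, (core S Q.1).indicator (fun _ => osc Q.1 f) x := by
  simp only [sjnNorm, ENNReal.rpow_one, div_one]

/-! ### The sparse functional is dominated by the maximal function -/

lemma core_disjoint_aux (hn : 0 < n) {Q0 : Cube n} {S : Set (Cube n)}
    (hS : ∀ Q ∈ S, IsDyadicSubcube Q0 Q) {x : Fin n → ℝ} (hx : x ∈ Q0.toSet) {k m : ℕ}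
    (hkm : k < m) (hm : dy Q0 m x ∈ S) : x ∉ core S (dy Q0 k x) := by
  classical
  -- The largest cube of `S` through `x` below level `k` is a child, so `x` is removed.
  have hex : ∃ l, k < l ∧ dy Q0 l x ∈ S := ⟨m, hkm, hm⟩
  obtain ⟨hl1, hl2⟩ := Nat.find_spec hex
  set l := Nat.find hex
  have hss : ∀ j, (dy Q0 j x).toSet ⊂ (dy Q0 k x).toSet ↔ k < j := by
    intro j
    rw [ssubset_iff_subset_not_subset]
    constructor
    · rintro ⟨-, h2⟩
      by_contra! h
      exact h2 (dy_anti hx h)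
    · intro h
      exact ⟨dy_anti hx h.le, fun h2 => absurd (level_le hn h2) (by omega)⟩
  rintro ⟨-, hx2⟩
  apply hx2
  simp only [mem_iUnion, exists_prop]
  refine ⟨dy Q0 l x, ⟨hl2, (hss l).2 hl1, ?_⟩, mem_dy_self hx l⟩
  intro Q hQ hQk hlQ
  obtain ⟨-, j, rfl⟩ := eq_dy_of_isDyadic (hS Q hQ) (hlQ (mem_dy_self hx l))
  exact dy_anti hx (Nat.find_min' hex ⟨(hss j).1 hQk, hQ⟩)

lemma core_unique (hn : 0 < n) {Q0 : Cube n} {S : Set (Cube n)}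
    (hS : ∀ Q ∈ S, IsDyadicSubcube Q0 Q) {x : Fin n → ℝ} {Q Q' : Cube n} (hQ : Q ∈ S)
    (hQ' : Q' ∈ S) (h : x ∈ core S Q) (h' : x ∈ core S Q') : Q = Q' := by
  obtain ⟨hx, k, rfl⟩ := eq_dy_of_isDyadic (hS Q hQ) h.1
  obtain ⟨-, m, rfl⟩ := eq_dy_of_isDyadic (hS Q' hQ') h'.1
  rcases lt_trichotomy k m with hlt | rfl | hlt
  · exact absurd h (core_disjoint_aux hn hS hx hlt hQ')
  · rfl
  · exact absurd h' (core_disjoint_aux hn hS hx hlt hQ)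

lemma sjnNorm_le (hn : 0 < n) {Q0 : Cube n} {f : (Fin n → ℝ) → ℝ} (hf : IntegrableOn f Q0.toSet)
    (c : ℝ) : sjnNorm Q0 1 f ≤ 2 * ∫⁻ x in Q0.toSet, mx Q0 f c x := by
  rw [sjnNorm_one, ← lintegral_const_mul' _ _ (by simp)]
  refine iSup_le fun S => iSup_le fun hS => setLIntegral_mono' (measurableSet_toSet Q0) ?_
  intro x hx
  by_cases h : ∃ Q : S, x ∈ core S Q.1
  · obtain ⟨Q, hQ⟩ := h
    rw [tsum_eq_single Q]
    · rw [indicator_of_mem hQ]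
      obtain ⟨-, m, hm⟩ := eq_dy_of_isDyadic (hS.2.1 _ Q.2) hQ.1
      rw [hm]
      refine (osc_le_two_mul (hf.mono_set (dy_subset hx m)) c).trans ?_
      gcongr
      exact le_iSup (fun m => av (dy Q0 m x) f c) m
    · intro Q' hne
      refine indicator_of_notMem (fun h' => hne ?_) _
      exact Subtype.ext (core_unique hn hS.2.1 Q'.2 Q.2 h' hQ)
  · push Not at h
    rw [ENNReal.tsum_eq_zero.2 fun Q => indicator_of_notMem (h Q) _]
    exact zero_le

/-! ### The sparse family of principal cubes -/

/-- The principal cube of level `m` at `x`: starting from `Q0`, it is replaced by the level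
`m + 1` cube through `x` as soon as the mean of `|f - f_P|` there exceeds twice the oscillation
of `f` on the current principal cube `P`. -/
def prinCube (Q0 : Cube n) (f : (Fin n → ℝ) → ℝ) (x : Fin n → ℝ) : ℕ → Cube n
  | 0 => dy Q0 0 x
  | m + 1 =>
    if 2 * osc (prinCube Q0 f x m) f < av (dy Q0 (m + 1) x) f (cubeAvg (prinCube Q0 f x m) f) then
      dy Q0 (m + 1) x else prinCube Q0 f x m

/-- The family of all principal cubes. -/
def prin (Q0 : Cube n) (f : (Fin n → ℝ) → ℝ) : Set (Cube n) :=
  {Q | ∃ m, ∃ x ∈ Q0.toSet, Q = dy Q0 m x ∧ prinCube Q0 f x m = Q}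

lemma prinCube_congr {Q0 : Cube n} (f : (Fin n → ℝ) → ℝ) {x y : Fin n → ℝ} (hx : x ∈ Q0.toSet)
    {m : ℕ} (hy : y ∈ (dy Q0 m x).toSet) : prinCube Q0 f y m = prinCube Q0 f x m := by
  induction m with
  | zero => exact dy_eq hx hy
  | succ m ih =>
    have h1 := ih (dy_anti hx (Nat.le_succ m) hy)
    simp only [prinCube, h1, dy_eq hx hy]

lemma prinCube_eq_dy (Q0 : Cube n) (f : (Fin n → ℝ) → ℝ) (x : Fin n → ℝ) (m : ℕ) :
    ∃ l ≤ m, prinCube Q0 f x m = dy Q0 l x ∧ prinCube Q0 f x l = dy Q0 l x ∧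
      ∀ k ≤ m, prinCube Q0 f x k = dy Q0 k x → k ≤ l := by
  induction m with
  | zero => exact ⟨0, le_rfl, rfl, rfl, fun k hk _ => hk⟩
  | succ m ih =>
    obtain ⟨l, hl, h1, h2, h3⟩ := ih
    by_cases h : 2 * osc (prinCube Q0 f x m) f
        < av (dy Q0 (m + 1) x) f (cubeAvg (prinCube Q0 f x m) f)
    · have : prinCube Q0 f x (m + 1) = dy Q0 (m + 1) x := by rw [prinCube, if_pos h]
      exact ⟨m + 1, le_rfl, this, this, fun k hk _ => hk⟩
    · have h4 : prinCube Q0 f x (m + 1) = prinCube Q0 f x m := by rw [prinCube, if_neg h]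
      refine ⟨l, by omega, h4.trans h1, h2, fun k hk hk' => ?_⟩
      rcases Nat.lt_or_ge m k with hlt | hge
      · obtain rfl : k = m + 1 := by omega
        rw [h4, h1] at hk'
        have := level_eq hk'
        omega
      · exact h3 k hge hk'

lemma prinCube_mem_prin {Q0 : Cube n} (f : (Fin n → ℝ) → ℝ) {x : Fin n → ℝ} (hx : x ∈ Q0.toSet)
    (m : ℕ) : prinCube Q0 f x m ∈ prin Q0 f := by
  obtain ⟨l, -, h1, h2, -⟩ := prinCube_eq_dy Q0 f x m
  exact ⟨l, x, hx, h1, h2.trans h1.symm⟩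

lemma isDyadic_of_prin {Q0 : Cube n} {f : (Fin n → ℝ) → ℝ} {Q : Cube n} (hQ : Q ∈ prin Q0 f) :
    IsDyadicSubcube Q0 Q := by
  obtain ⟨m, x, hx, rfl, -⟩ := hQ
  exact isDyadic_dy hx m

/-- The children of a principal cube in `prin` satisfy the stopping condition with respect to it. -/
lemma child_large (hn : 0 < n) {Q0 : Cube n} {f : (Fin n → ℝ) → ℝ} {Q Q' : Cube n}
    (hQ : Q ∈ prin Q0 f) (hQ' : Q' ∈ sparseChildren (prin Q0 f) Q) :
    2 * osc Q f < av Q' f (cubeAvg Q f) := by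
  obtain ⟨⟨m, y, hy, rfl, hm⟩, hss, hmax⟩ := hQ'
  obtain ⟨k, x, hx, rfl, hk⟩ := hQ
  have hyx : y ∈ (dy Q0 k x).toSet := hss.subset (mem_dy_self hy m)
  have hdy : dy Q0 k y = dy Q0 k x := dy_eq hx hyx
  have hky : prinCube Q0 f y k = dy Q0 k y := by rw [prinCube_congr f hx hyx, hk, hdy]
  rw [← hdy] at hss hmax ⊢
  have hkm : k < m := by
    by_contra! h
    exact hss.2 (dy_anti hy h)
  obtain ⟨m, rfl⟩ : ∃ m', m = m' + 1 := ⟨m - 1, by omega⟩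
  obtain ⟨l, hl, h1, h2, h3⟩ := prinCube_eq_dy Q0 f y m
  have hkl : k ≤ l := h3 k (by omega) hky
  -- The principal cube of the parent of `Q'` lies between `Q'` and `Q`, hence is `Q`.
  have hlk : l = k := by
    by_contra hne
    have hlt : k < l := by omega
    have := hmax (dy Q0 l y) ⟨l, y, hy, rfl, h2⟩
      ⟨dy_anti hy hkl, fun h => absurd (level_le hn h) (by omega)⟩ (dy_anti hy (by omega))
    have := level_le hn this
    omega
  subst hlk
  by_contra hneg
  rw [prinCube, h1, if_neg hneg] at hm
  have := level_eq hm
  omega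

lemma children_disjoint {Q0 : Cube n} {S : Set (Cube n)} (hn : 0 < n)
    (hS : ∀ Q ∈ S, IsDyadicSubcube Q0 Q) (Q : Cube n) :
    (sparseChildren S Q).PairwiseDisjoint Cube.toSet := by
  rintro A ⟨hA, hAQ, hAmax⟩ B ⟨hB, hBQ, hBmax⟩ hne
  rw [Function.onFun, Set.disjoint_left]
  intro z hzA hzB
  apply hne
  obtain ⟨hz, k, rfl⟩ := eq_dy_of_isDyadic (hS A hA) hzA
  obtain ⟨-, m, rfl⟩ := eq_dy_of_isDyadic (hS B hB) hzB
  rcases le_total k m with h | h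
  · exact dy_inj hn hz hz ((hBmax _ hA hAQ (dy_anti hz h)).antisymm (dy_anti hz h))
  · exact dy_inj hn hz hz ((dy_anti hz h).antisymm (hAmax _ hB hBQ (dy_anti hz h)))

lemma prin_sparse (hn : 0 < n) {Q0 : Cube n} {f : (Fin n → ℝ) → ℝ}
    (hf : IntegrableOn f Q0.toSet) : IsSparse Q0 (prin Q0 f) := by
  have hcount : (prin Q0 f).Countable :=
    (countable_dyadic Q0).mono fun Q hQ => isDyadic_of_prin hQ
  refine ⟨hcount, fun Q => isDyadic_of_prin, fun Q hQ => ?_⟩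
  set C := sparseChildren (prin Q0 f) Q with hC
  have hCc : C.Countable := hcount.mono fun _ h => h.1
  have hfQ : IntegrableOn f Q.toSet := by
    obtain ⟨m, x, hx, rfl, -⟩ := hQ
    exact hf.mono_set (dy_subset hx m)
  have hoscT : osc Q f ≠ ∞ := av_ne_top hfQ _
  have hsub : (⋃ Q' ∈ C, Q'.toSet) ⊆ Q.toSet := iUnion₂_subset fun Q' h => h.2.1.subset
  -- Each child satisfies the stopping inequality; sum it over the disjoint children.
  have hsum : 2 * osc Q f * (∑' Q' : C, Cube.vol Q'.1) ≤ osc Q f * Q.vol := by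
    calc 2 * osc Q f * (∑' Q' : C, Cube.vol Q'.1)
        = ∑' Q' : C, 2 * osc Q f * Cube.vol Q'.1 := ENNReal.tsum_mul_left.symm
      _ ≤ ∑' Q' : C, ∫⁻ x in (Q'.1).toSet, ‖f x - cubeAvg Q f‖ₑ := by
          refine ENNReal.tsum_le_tsum fun Q' => ?_
          rw [← av_mul_vol]
          gcongr
          exact (child_large hn hQ Q'.2).le
      _ = ∫⁻ x in ⋃ Q' ∈ C, Q'.toSet, ‖f x - cubeAvg Q f‖ₑ :=
          (lintegral_biUnion hCc (fun Q' _ => measurableSet_toSet Q')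
            (children_disjoint hn (fun Q => isDyadic_of_prin) Q) _).symm
      _ ≤ ∫⁻ x in Q.toSet, ‖f x - cubeAvg Q f‖ₑ := lintegral_mono_set hsub
      _ = osc Q f * Q.vol := by rw [osc_eq_av, av_mul_vol]
  by_cases h0 : osc Q f = 0
  · have hempty : ∀ Q' : C, False := by
      intro Q'
      have h1 := child_large hn hQ Q'.2
      rw [h0, mul_zero] at h1
      have h2 : ∫⁻ x in (Q'.1).toSet, ‖f x - cubeAvg Q f‖ₑ ≤ 0 :=
        calc _ ≤ ∫⁻ x in Q.toSet, ‖f x - cubeAvg Q f‖ₑ := lintegral_mono_set Q'.2.2.1.subset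
          _ = 0 := by rw [← av_mul_vol, ← osc_eq_av, h0, zero_mul]
      rw [← av_mul_vol] at h2
      exact absurd h2 (not_le.2 (ENNReal.mul_pos h1.ne' (vol_ne_zero _)))
    have : IsEmpty C := ⟨hempty⟩
    simp
  · have h3 : osc Q f * (2 * ∑' Q' : C, Cube.vol Q'.1) ≤ osc Q f * Q.vol := by
      calc _ = 2 * osc Q f * (∑' Q' : C, Cube.vol Q'.1) := by ring
        _ ≤ _ := hsum
    have h4 := (ENNReal.mul_le_mul_iff_right h0 hoscT).1 h3
    rw [one_div, ← ENNReal.div_eq_inv_mul, ENNReal.le_div_iff_mul_le (by simp) (by simp), mul_comm]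
    exact h4

lemma vol_le_core {Q0 : Cube n} {S : Set (Cube n)} (hS : IsSparse Q0 S) {Q : Cube n} (hQ : Q ∈ S) :
    MeasurableSet (core S Q) ∧ Q.vol ≤ 2 * volume (core S Q) := by
  have hCc : (sparseChildren S Q).Countable := hS.1.mono fun _ h => h.1
  have hm : MeasurableSet (⋃ Q' ∈ sparseChildren S Q, Cube.toSet Q') :=
    MeasurableSet.biUnion hCc fun Q' _ => measurableSet_toSet Q'
  refine ⟨(measurableSet_toSet Q).diff hm, ?_⟩
  have h1 : volume (⋃ Q' ∈ sparseChildren S Q, Cube.toSet Q') ≤ (1 / 2) * Q.vol :=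
    (measure_biUnion_le volume hCc _).trans (hS.2.2 Q hQ)
  have h2 : Q.vol ≤ (1 / 2) * Q.vol + volume (core S Q) := by
    calc Q.vol ≤ volume (Q.toSet ∩ ⋃ Q' ∈ sparseChildren S Q, Cube.toSet Q')
          + volume (core S Q) := measure_le_inter_add_sdiff _ _ _
      _ ≤ _ := by
        gcongr
        exact (measure_mono inter_subset_right).trans h1
  have hT : (1 / 2) * Q.vol ≠ ∞ := ENNReal.mul_ne_top (by simp) (vol_ne_top Q)
  have h3 : (1 / 2) * Q.vol + (1 / 2) * Q.vol = Q.vol := by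
    rw [← add_mul, ENNReal.add_halves, one_mul]
  have h4 : (1 / 2) * Q.vol ≤ volume (core S Q) :=
    (ENNReal.add_le_add_iff_left hT).1 (h3.le.trans h2)
  calc Q.vol = 2 * ((1 / 2) * Q.vol) := by rw [two_mul, h3]
    _ ≤ _ := by gcongr

/-- Telescoping along the principal cubes through `x`: the mean of `|f - f_P|` on the last
principal cube `P`, and `|f_P - f_{Q0}|`, are controlled by the sum of the oscillations. -/
lemma telescope {Q0 : Cube n} {f : (Fin n → ℝ) → ℝ} (hf : IntegrableOn f Q0.toSet)
    {x : Fin n → ℝ} (hx : x ∈ Q0.toSet) (H : Cube n → ℝ≥0∞)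
    (hH : ∀ m, prinCube Q0 f x m = dy Q0 m x → osc (dy Q0 m x) f ≤ H (dy Q0 m x)) (m : ℕ) :
    av (dy Q0 m x) f (cubeAvg (prinCube Q0 f x m) f) ≤ 2 * osc (prinCube Q0 f x m) f ∧
    ‖cubeAvg (prinCube Q0 f x m) f - cubeAvg Q0 f‖ₑ + 2 ^ (n + 1) * osc (prinCube Q0 f x m) f
      ≤ 2 ^ (n + 1) * ∑ k ∈ Finset.range (m + 1), H (dy Q0 k x) := by
  have h1le : ∀ a : ℝ≥0∞, a ≤ 2 * a := fun a => by
    rw [two_mul]; exact le_self_add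
  induction m with
  | zero =>
    refine ⟨h1le _, ?_⟩
    simp only [prinCube, zero_add, Finset.range_one, Finset.sum_singleton]
    rw [dy_zero hx, sub_self, enorm_zero, zero_add]
    gcongr
    have := hH 0 rfl
    rwa [dy_zero hx] at this
  | succ m ih =>
    obtain ⟨ih1, ih2⟩ := ih
    rw [Finset.sum_range_succ, mul_add]
    by_cases h : 2 * osc (prinCube Q0 f x m) f
        < av (dy Q0 (m + 1) x) f (cubeAvg (prinCube Q0 f x m) f)
    · have hs : prinCube Q0 f x (m + 1) = dy Q0 (m + 1) x := by rw [prinCube, if_pos h]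
      rw [hs]
      refine ⟨h1le _, ?_⟩
      gcongr
      · refine le_trans ?_ ih2
        calc ‖cubeAvg (dy Q0 (m + 1) x) f - cubeAvg Q0 f‖ₑ
            = ‖(cubeAvg (prinCube Q0 f x m) f - cubeAvg Q0 f) +
                (cubeAvg (dy Q0 (m + 1) x) f - cubeAvg (prinCube Q0 f x m) f)‖ₑ := by ring_nf
          _ ≤ ‖cubeAvg (prinCube Q0 f x m) f - cubeAvg Q0 f‖ₑ +
                ‖cubeAvg (dy Q0 (m + 1) x) f - cubeAvg (prinCube Q0 f x m) f‖ₑ := enorm_add_le _ _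
          _ ≤ _ := by
            gcongr
            calc _ ≤ av (dy Q0 (m + 1) x) f (cubeAvg (prinCube Q0 f x m) f) :=
                  enorm_cubeAvg_sub_le (hf.mono_set (dy_subset hx _)) _
              _ ≤ 2 ^ n * av (dy Q0 m x) f (cubeAvg (prinCube Q0 f x m) f) := av_dy_succ_le hx m f _
              _ ≤ 2 ^ n * (2 * osc (prinCube Q0 f x m) f) := by gcongr
              _ = _ := by ring
      · exact hH _ hs
    · have hs : prinCube Q0 f x (m + 1) = prinCube Q0 f x m := by rw [prinCube, if_neg h]
      rw [hs]
      exact ⟨not_lt.1 h, ih2.trans le_self_add⟩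

/-- Pointwise sparse domination of the maximal function by oscillations. -/
lemma mx_le {Q0 : Cube n} {f : (Fin n → ℝ) → ℝ} (hf : IntegrableOn f Q0.toSet)
    {x : Fin n → ℝ} (hx : x ∈ Q0.toSet) :
    mx Q0 f (cubeAvg Q0 f) x ≤
      2 ^ (n + 1) * ∑' Q : prin Q0 f, (Q.1.toSet).indicator (fun _ => osc Q.1 f) x := by
  classical
  set G : Cube n → ℝ≥0∞ := fun Q => Q.toSet.indicator (fun _ => osc Q f) x with hG
  have hT : ∑' Q : prin Q0 f, (Q.1.toSet).indicator (fun _ => osc Q.1 f) x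
      = ∑' Q, (prin Q0 f).indicator G Q := tsum_subtype (prin Q0 f) G
  rw [hT]
  refine iSup_le fun m => ?_
  have hH : ∀ m, prinCube Q0 f x m = dy Q0 m x →
      osc (dy Q0 m x) f ≤ (prin Q0 f).indicator G (dy Q0 m x) := by
    intro m hm
    rw [indicator_of_mem (show dy Q0 m x ∈ prin Q0 f from ⟨m, x, hx, rfl, hm⟩), hG]
    simp only
    rw [indicator_of_mem (mem_dy_self hx m)]
  obtain ⟨h1, h2⟩ := telescope hf hx _ hH m
  have h3 : ∑ k ∈ Finset.range (m + 1), (prin Q0 f).indicator G (dy Q0 k x)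
      ≤ ∑' Q, (prin Q0 f).indicator G Q := by
    rw [← Finset.sum_image (g := fun k => dy Q0 k x) (fun a _ b _ h => level_eq h)]
    exact ENNReal.sum_le_tsum _
  have hpow : (2 : ℝ≥0∞) ≤ 2 ^ (n + 1) := by
    rw [pow_succ]
    exact le_mul_of_one_le_left (by simp) (one_le_pow₀ (by norm_num))
  calc av (dy Q0 m x) f (cubeAvg Q0 f)
      ≤ ‖cubeAvg (prinCube Q0 f x m) f - cubeAvg Q0 f‖ₑ
        + av (dy Q0 m x) f (cubeAvg (prinCube Q0 f x m) f) := av_le_add _ _ _ _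
    _ ≤ ‖cubeAvg (prinCube Q0 f x m) f - cubeAvg Q0 f‖ₑ + 2 ^ (n + 1) * osc (prinCube Q0 f x m) f := by
        gcongr
        exact h1.trans (by gcongr)
    _ ≤ _ := h2
    _ ≤ _ := by gcongr

/-- Integrating a sum of constants over sets contained in `Q0`. -/
lemma lintegral_tsum_indicator {Q0 : Cube n} {ι : Type*} [Countable ι]
    (E : ι → Set (Fin n → ℝ)) (hE : ∀ i, MeasurableSet (E i)) (hsub : ∀ i, E i ⊆ Q0.toSet)
    (a : ι → ℝ≥0∞) :
    ∫⁻ x in Q0.toSet, ∑' i, (E i).indicator (fun _ => a i) x = ∑' i, a i * volume (E i) := by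
  rw [lintegral_tsum fun i => (measurable_const.indicator (hE i)).aemeasurable]
  refine tsum_congr fun i => ?_
  rw [lintegral_indicator_const (hE i), Measure.restrict_apply (hE i), inter_eq_left.2 (hsub i)]

lemma lintegral_mx_le (hn : 0 < n) {Q0 : Cube n} {f : (Fin n → ℝ) → ℝ}
    (hf : IntegrableOn f Q0.toSet) :
    ∫⁻ x in Q0.toSet, mx Q0 f (cubeAvg Q0 f) x ≤ 2 ^ (n + 2) * sjnNorm Q0 1 f := by
  have hS := prin_sparse hn hf
  have : Countable (prin Q0 f) := hS.1.to_subtype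
  have hsub : ∀ Q : prin Q0 f, Q.1.toSet ⊆ Q0.toSet := by
    rintro ⟨_, m, x, hx, rfl, -⟩
    exact dy_subset hx m
  have h1 := lintegral_tsum_indicator (fun Q : prin Q0 f => Q.1.toSet)
    (fun Q => measurableSet_toSet Q.1) hsub (fun Q => osc Q.1 f)
  have h2 := lintegral_tsum_indicator (fun Q : prin Q0 f => core (prin Q0 f) Q.1)
    (fun Q => (vol_le_core hS Q.2).1) (fun Q => sdiff_subset.trans (hsub Q)) (fun Q => osc Q.1 f)
  have h3 : ∫⁻ x in Q0.toSet, ∑' Q : prin Q0 f,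
      (core (prin Q0 f) Q.1).indicator (fun _ => osc Q.1 f) x ≤ sjnNorm Q0 1 f := by
    rw [sjnNorm_one]
    exact le_iSup₂ (f := fun (S : Set (Cube n)) (_ : IsSparse Q0 S) =>
      ∫⁻ x in Q0.toSet, ∑' Q : S, (core S Q.1).indicator (fun _ => osc Q.1 f) x) _ hS
  calc ∫⁻ x in Q0.toSet, mx Q0 f (cubeAvg Q0 f) x
      ≤ ∫⁻ x in Q0.toSet, 2 ^ (n + 1) *
          ∑' Q : prin Q0 f, (Q.1.toSet).indicator (fun _ => osc Q.1 f) x :=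
        setLIntegral_mono' (measurableSet_toSet Q0) fun x hx => mx_le hf hx
    _ = 2 ^ (n + 1) * ∑' Q : prin Q0 f, osc Q.1 f * volume Q.1.toSet := by
        rw [lintegral_const_mul' _ _ (by simp), h1]
    _ ≤ 2 ^ (n + 1) * ∑' Q : prin Q0 f, 2 * (osc Q.1 f * volume (core (prin Q0 f) Q.1)) := by
        refine mul_le_mul' le_rfl (ENNReal.tsum_le_tsum fun Q => ?_)
        calc osc Q.1 f * volume Q.1.toSet
            ≤ osc Q.1 f * (2 * volume (core (prin Q0 f) Q.1)) := by
              gcongr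
              exact (vol_le_core hS Q.2).2
          _ = _ := by ring
    _ = 2 ^ (n + 2) * ∑' Q : prin Q0 f, osc Q.1 f * volume (core (prin Q0 f) Q.1) := by
        rw [ENNReal.tsum_mul_left, ← mul_assoc, ← pow_succ]
    _ ≤ _ := by
        rw [← h2]
        gcongr

/-! ### Level sets of the maximal function -/

/-- The level set `{M(f - c) > t}`. -/
def lvl (Q0 : Cube n) (f : (Fin n → ℝ) → ℝ) (c : ℝ) (t : ℝ≥0∞) : Set (Fin n → ℝ) :=
  {x | x ∈ Q0.toSet ∧ t < mx Q0 f c x}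

/-- The first level at which the mean of `|f - c|` exceeds `t`; this selects the maximal dyadic
cubes that make up `lvl`. -/
def first (Q0 : Cube n) (f : (Fin n → ℝ) → ℝ) (c : ℝ) (t : ℝ≥0∞) (x : Fin n → ℝ) : ℕ :=
  sInf {m | t < av (dy Q0 m x) f c}

section
variable {Q0 : Cube n} {f : (Fin n → ℝ) → ℝ} {c : ℝ} {t : ℝ≥0∞}

lemma lvl_subset : lvl Q0 f c t ⊆ Q0.toSet := fun _ h => h.1

lemma lt_av_first {x : Fin n → ℝ} (hx : x ∈ lvl Q0 f c t) :
    t < av (dy Q0 (first Q0 f c t x) x) f c := by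
  obtain ⟨m, hm⟩ := lt_iSup_iff.1 hx.2
  exact Nat.sInf_mem (s := {m | t < av (dy Q0 m x) f c}) ⟨m, hm⟩

lemma first_level {x : Fin n → ℝ} (hx : x ∈ lvl Q0 f c t) {y : Fin n → ℝ}
    (hy : y ∈ (dy Q0 (first Q0 f c t x) x).toSet) :
    y ∈ lvl Q0 f c t ∧ first Q0 f c t y = first Q0 f c t x := by
  have h1 := lt_av_first hx
  have h2 : t < av (dy Q0 (first Q0 f c t x) y) f c := by rwa [dy_eq hx.1 hy]
  have hyl : y ∈ lvl Q0 f c t := ⟨dy_subset hx.1 _ hy, lt_iSup_iff.2 ⟨_, h2⟩⟩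
  refine ⟨hyl, le_antisymm (Nat.sInf_le h2) ?_⟩
  by_contra! hlt
  have h3 := lt_av_first hyl
  rw [dy_eq_of_le hx.1 hlt.le hy] at h3
  exact absurd (Nat.sInf_le (s := {m | t < av (dy Q0 m x) f c}) h3) (not_le.2 hlt)

lemma lvl_weak : MeasurableSet (lvl Q0 f c t) ∧
    t * volume (lvl Q0 f c t) ≤ ∫⁻ x in lvl Q0 f c t, ‖f x - c‖ₑ := by
  have := lintegral_le_of_level (h₁ := fun _ => t) (h₂ := fun x => ‖f x - c‖ₑ)
    (lvl_subset (Q0 := Q0) (f := f) (c := c) (t := t)) (fun x hx y => first_level hx) ?_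
  · rwa [setLIntegral_const] at this
  · intro x hx
    rw [setLIntegral_const, ← av_mul_vol]
    exact mul_le_mul' (lt_av_first hx).le le_rfl

/-- Reverse weak-type bound: above the mean over `Q0`, the parent of each maximal cube of the
level set has mean at most `t`. -/
lemma lvl_rev (ht : av Q0 f c ≤ t) :
    ∫⁻ x in lvl Q0 f c t, ‖f x - c‖ₑ ≤ 2 ^ n * t * volume (lvl Q0 f c t) := by
  have := (lintegral_le_of_level (h₂ := fun _ => 2 ^ n * t) (h₁ := fun x => ‖f x - c‖ₑ)
    (lvl_subset (Q0 := Q0) (f := f) (c := c) (t := t)) (fun x hx y => first_level hx) ?_).2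
  · rwa [setLIntegral_const] at this
  · intro x hx
    rw [setLIntegral_const, ← av_mul_vol]
    refine mul_le_mul' ?_ le_rfl
    have h1 := lt_av_first hx
    obtain ⟨m, hm⟩ : ∃ m, first Q0 f c t x = m + 1 := by
      refine Nat.exists_eq_succ_of_ne_zero fun h0 => ?_
      rw [h0, dy_zero hx.1] at h1
      exact absurd ht (not_le.2 h1)
    rw [hm]
    refine (av_dy_succ_le hx.1 m f c).trans ?_
    refine mul_le_mul' le_rfl ?_
    by_contra! hlt
    have : first Q0 f c t x ≤ m := Nat.sInf_le hlt
    omega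

lemma volume_lvl_ne_top : volume (lvl Q0 f c t) ≠ ∞ :=
  ne_top_of_le_ne_top (vol_ne_top Q0) (measure_mono lvl_subset)

/-- The weak-type bound with the integral restricted to the set where `|f - c|` is large. -/
lemma lvl_weak_trunc (ht : t ≠ ∞) : t * volume (lvl Q0 f c t) ≤
    2 * ∫⁻ x in Q0.toSet, {a : ℝ≥0∞ | t < 2 * a}.indicator id ‖f x - c‖ₑ := by
  set V := volume (lvl Q0 f c t) with hV
  set I := ∫⁻ x in Q0.toSet, {a : ℝ≥0∞ | t < 2 * a}.indicator id ‖f x - c‖ₑ with hI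
  have h1 : t * V ≤ I + t / 2 * V := by
    calc t * V ≤ ∫⁻ x in lvl Q0 f c t, ‖f x - c‖ₑ := lvl_weak.2
      _ ≤ ∫⁻ x in lvl Q0 f c t,
            ({a : ℝ≥0∞ | t < 2 * a}.indicator id ‖f x - c‖ₑ + t / 2) := by
          refine lintegral_mono fun x => ?_
          by_cases h : t < 2 * ‖f x - c‖ₑ
          · rw [indicator_of_mem (show ‖f x - c‖ₑ ∈ {a : ℝ≥0∞ | t < 2 * a} from h)]
            exact le_self_add
          · rw [indicator_of_notMem (show ‖f x - c‖ₑ ∉ {a : ℝ≥0∞ | t < 2 * a} from h), zero_add,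
              ENNReal.le_div_iff_mul_le (by simp) (by simp), mul_comm]
            exact not_lt.1 h
      _ = (∫⁻ x in lvl Q0 f c t, {a : ℝ≥0∞ | t < 2 * a}.indicator id ‖f x - c‖ₑ)
            + t / 2 * V := by
          rw [lintegral_add_right _ measurable_const, setLIntegral_const]
      _ ≤ _ := by
          gcongr
          exact lintegral_mono_set lvl_subset
  have h2 : t * V = t / 2 * V + t / 2 * V := by rw [← add_mul, ENNReal.add_halves]
  have h3 : t / 2 * V ≠ ∞ :=
    ENNReal.mul_ne_top (ENNReal.div_ne_top ht (by simp)) volume_lvl_ne_top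
  have h4 : t / 2 * V ≤ I := (ENNReal.add_le_add_iff_right h3).1 (h2 ▸ h1)
  rw [h2, ← two_mul]
  gcongr

/-- Lebesgue differentiation along dyadic cubes. -/
lemma ae_le_mx (hf : IntegrableOn f Q0.toSet) :
    ∀ᵐ x ∂volume.restrict Q0.toSet, ‖f x - c‖ₑ ≤ mx Q0 f c x := by
  set G : (Fin n → ℝ) → ℝ := Q0.toSet.indicator (fun x => ‖f x - c‖) with hG
  have hGi : Integrable G :=
    (integrable_indicator_iff (measurableSet_toSet Q0)).2 (integrableOn_sub hf c).norm
  have hae := IsUnifLocDoublingMeasure.ae_tendsto_average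
    (μ := (volume : Measure (Fin n → ℝ))) hGi.locallyIntegrable 1
  rw [ae_restrict_iff' (measurableSet_toSet Q0)]
  filter_upwards [hae] with x hx hx0
  set w : ℕ → (Fin n → ℝ) := fun m i => (dy Q0 m x).corner i + (dy Q0 m x).side / 2 with hw
  set δ : ℕ → ℝ := fun m => (dy Q0 m x).side / 2 with hδ
  have hball : ∀ m, Metric.closedBall (w m) (δ m) = Set.univ.pi fun i =>
      Set.Icc ((dy Q0 m x).corner i) ((dy Q0 m x).corner i + (dy Q0 m x).side) := by
    intro m
    rw [closedBall_pi _ (half_pos (dy Q0 m x).side_pos).le]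
    refine congrArg _ (funext fun i => ?_)
    rw [Real.closedBall_eq_Icc]
    simp only [hw]
    congr 1 <;> ring
  have hsub : ∀ m, (dy Q0 m x).toSet ⊆ Metric.closedBall (w m) (δ m) := by
    intro m
    rw [hball]
    exact Set.pi_mono fun i _ => Ico_subset_Icc_self
  have hδlim : Filter.Tendsto δ Filter.atTop (nhdsWithin 0 (Ioi 0)) := by
    refine tendsto_nhdsWithin_iff.2 ⟨?_, Filter.Eventually.of_forall fun m =>
      half_pos (dy Q0 m x).side_pos⟩
    have h1 : Filter.Tendsto (fun m : ℕ => Q0.side / 2 * (1 / 2 : ℝ) ^ m) Filter.atTop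
        (nhds (Q0.side / 2 * 0)) :=
      (_root_.tendsto_pow_atTop_nhds_zero_of_lt_one (by norm_num) (by norm_num)).const_mul _
    rw [mul_zero] at h1
    refine h1.congr fun m => ?_
    simp only [hδ, dy, one_div, inv_pow]
    ring
  have hlim := hx w δ hδlim (Filter.Eventually.of_forall fun m => by
    rw [one_mul]; exact hsub m (mem_dy_self hx0 m))
  have havg : ∀ m, ENNReal.ofReal (⨍ y in Metric.closedBall (w m) (δ m), G y)
      = av (dy Q0 m x) f c := by
    intro m
    have hcongr : (Metric.closedBall (w m) (δ m) : Set (Fin n → ℝ))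
        =ᵐ[volume] (dy Q0 m x).toSet := by
      rw [hball]
      exact (Measure.pi_Ico_ae_eq_pi_Icc (s := univ)).symm
    have hfd := hf.mono_set (dy_subset hx0 m)
    have hint : ∫ y in (dy Q0 m x).toSet, G y = ∫ y in (dy Q0 m x).toSet, ‖f y - c‖ :=
      setIntegral_congr_fun (measurableSet_toSet _) fun y hy =>
        indicator_of_mem (dy_subset hx0 m hy) _
    rw [setAverage_congr hcongr, setAverage_eq, hint, smul_eq_mul,
      ENNReal.ofReal_mul (by positivity),
      ofReal_integral_norm_eq_lintegral_enorm (integrableOn_sub hfd c),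
      ENNReal.ofReal_inv_of_pos (show 0 < volume.real (dy Q0 m x).toSet from
        ENNReal.toReal_pos (vol_ne_zero _) (vol_ne_top _)), Measure.real,
      ENNReal.ofReal_toReal (show volume (dy Q0 m x).toSet ≠ ∞ from vol_ne_top _)]
    rfl
  have hlim2 := (ENNReal.continuous_ofReal.tendsto _).comp hlim
  have hGx : ENNReal.ofReal (G x) = ‖f x - c‖ₑ := by
    rw [hG, indicator_of_mem hx0, ofReal_norm]
  rw [hGx] at hlim2
  refine le_of_tendsto' hlim2 fun m => ?_
  rw [Function.comp_apply, havg]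
  exact le_iSup (fun m => av (dy Q0 m x) f c) m

lemma lintegral_large_le (hf : IntegrableOn f Q0.toSet) (ht : av Q0 f c ≤ t) :
    ∫⁻ x in Q0.toSet, {a : ℝ≥0∞ | t < a}.indicator id ‖f x - c‖ₑ
      ≤ 2 ^ n * t * volume (lvl Q0 f c t) := by
  refine le_trans ?_ (lvl_rev ht)
  calc ∫⁻ x in Q0.toSet, {a : ℝ≥0∞ | t < a}.indicator id ‖f x - c‖ₑ
      ≤ ∫⁻ x in Q0.toSet, (lvl Q0 f c t).indicator (fun x => ‖f x - c‖ₑ) x := by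
        refine lintegral_mono_ae ?_
        filter_upwards [ae_le_mx (c := c) hf, ae_restrict_mem (measurableSet_toSet Q0)]
          with x hx hx0
        by_cases h : t < ‖f x - c‖ₑ
        · rw [indicator_of_mem (show ‖f x - c‖ₑ ∈ {a : ℝ≥0∞ | t < a} from h),
            indicator_of_mem (show x ∈ lvl Q0 f c t from ⟨hx0, h.trans_le hx⟩)]
          rfl
        · rw [indicator_of_notMem (show ‖f x - c‖ₑ ∉ {a : ℝ≥0∞ | t < a} from h)]
          exact zero_le
    _ = ∫⁻ x in lvl Q0 f c t, ‖f x - c‖ₑ := by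
        rw [setLIntegral_indicator lvl_weak.1, inter_eq_left.2 lvl_subset]

end

/-! ### Dyadic layer-cake sums and logarithms -/

lemma sum_pow_indicator_le (a : ℝ≥0∞) :
    ∑' k : ℕ, (if (2 : ℝ≥0∞) ^ k < a then (2 : ℝ≥0∞) ^ k else 0) ≤ 2 * a := by
  have h : ∀ K : ℕ,
      ∑ k ∈ Finset.range K, (if (2 : ℝ≥0∞) ^ k < a then (2 : ℝ≥0∞) ^ k else 0) ≤ 2 ^ K ∧
      ∑ k ∈ Finset.range K, (if (2 : ℝ≥0∞) ^ k < a then (2 : ℝ≥0∞) ^ k else 0) ≤ 2 * a := by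
    intro K
    induction K with
    | zero => simp
    | succ K ih =>
      rw [Finset.sum_range_succ]
      have h1 : (2 : ℝ≥0∞) ^ (K + 1) = 2 ^ K + 2 ^ K := by rw [pow_succ, mul_two]
      split_ifs with h
      · refine ⟨h1 ▸ add_le_add ih.1 le_rfl, (add_le_add ih.1 le_rfl).trans ?_⟩
        rw [two_mul]
        exact add_le_add h.le h.le
      · rw [add_zero]
        exact ⟨ih.1.trans (h1 ▸ le_self_add), ih.2⟩
  exact ENNReal.tsum_le_of_sum_range_le fun K => (h K).2

lemma le_one_add_sum_pow_indicator (a : ℝ≥0∞) :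
    a ≤ 1 + ∑' k : ℕ, (if (2 : ℝ≥0∞) ^ k < a then (2 : ℝ≥0∞) ^ k else 0) := by
  have h : ∀ K : ℕ, min a (2 ^ K) ≤
      1 + ∑ k ∈ Finset.range K, (if (2 : ℝ≥0∞) ^ k < a then (2 : ℝ≥0∞) ^ k else 0) := by
    intro K
    induction K with
    | zero => simp
    | succ K ih =>
      rw [Finset.sum_range_succ, ← add_assoc]
      split_ifs with h
      · rw [min_eq_right h.le] at ih
        refine (min_le_right _ _).trans ?_
        rw [pow_succ, mul_two]
        exact add_le_add ih le_rfl
      · rw [min_eq_left (not_lt.1 h)] at ih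
        rw [add_zero]
        exact (min_le_left _ _).trans ih
  by_contra! hlt
  obtain ⟨N, hN⟩ := ENNReal.exists_nat_gt (ne_top_of_lt hlt)
  have hN2 : (N : ℝ≥0∞) < 2 ^ N := by exact_mod_cast N.lt_two_pow_self
  have h1 := (h N).trans (add_le_add le_rfl (ENNReal.sum_le_tsum _))
  exact absurd h1 (not_le.2 (lt_min hlt (hN.trans hN2)))

lemma pow_lt_ofReal (k : ℕ) (a : ℝ) : (2 : ℝ≥0∞) ^ k < ENNReal.ofReal a ↔ (2 : ℝ) ^ k < a := by
  rw [show (2 : ℝ≥0∞) ^ k = ENNReal.ofReal ((2 : ℝ) ^ k) by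
    rw [ENNReal.ofReal_pow (by norm_num)]; simp]
  exact ENNReal.ofReal_lt_ofReal_iff_of_nonneg (by positivity)

lemma one_le_log_exp_add {a : ℝ} (ha : 0 ≤ a) : 1 ≤ Real.log (Real.exp 1 + a) := by
  rw [Real.le_log_iff_exp_le (by positivity)]
  linarith

lemma sum_indicator_le_log {a : ℝ} (ha : 0 ≤ a) :
    ∑' k : ℕ, {b : ℝ≥0∞ | 2 ^ k < 2 * b}.indicator id (ENNReal.ofReal a)
      ≤ 5 * ENNReal.ofReal (a * Real.log (Real.exp 1 + a)) := by
  have hl1 := one_le_log_exp_add ha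
  set l := Real.log (Real.exp 1 + a) with hl
  have hlog2 : (1 : ℝ) / 2 < Real.log 2 := by linarith [Real.log_two_gt_d9]
  have he : (2 : ℝ) ≤ Real.exp 1 := by linarith [Real.add_one_le_exp (1 : ℝ)]
  set K := ⌈4 * l⌉₊ with hK
  have hK1 : 4 * l ≤ K := Nat.le_ceil _
  have hK2 : (K : ℝ) ≤ 5 * l := by
    have := Nat.ceil_lt_add_one (show 0 ≤ 4 * l by linarith)
    linarith
  have h2a : 2 * a ≤ 2 ^ K := by
    rcases ha.eq_or_lt with rfl | hpos
    · simp
    rw [← Real.log_le_log_iff (by positivity) (by positivity), Real.log_pow,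
      Real.log_mul (by norm_num) hpos.ne']
    have h1 : Real.log 2 ≤ l := Real.log_le_log (by norm_num) (by linarith)
    have h2 : Real.log a ≤ l := Real.log_le_log hpos (by linarith [Real.exp_pos 1])
    have h3 : 4 * l * (1 / 2) ≤ K * Real.log 2 := by
      apply mul_le_mul hK1 hlog2.le (by norm_num) (by positivity)
    linarith
  have hzero : ∀ k ∉ Finset.range K,
      {b : ℝ≥0∞ | 2 ^ k < 2 * b}.indicator id (ENNReal.ofReal a) = 0 := by
    intro k hk
    refine indicator_of_notMem ?_ _
    simp only [mem_ofPred_eq]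
    rw [show (2 : ℝ≥0∞) * ENNReal.ofReal a = ENNReal.ofReal (2 * a) by
      rw [ENNReal.ofReal_mul (by norm_num)]; simp, pow_lt_ofReal, not_lt]
    refine h2a.trans (pow_le_pow_right₀ (by norm_num) ?_)
    simpa using hk
  rw [tsum_eq_sum hzero]
  calc ∑ k ∈ Finset.range K, {b : ℝ≥0∞ | 2 ^ k < 2 * b}.indicator id (ENNReal.ofReal a)
      ≤ ∑ k ∈ Finset.range K, ENNReal.ofReal a :=
        Finset.sum_le_sum fun k _ => indicator_le_self _ _ _
    _ = ENNReal.ofReal (K * a) := by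
        rw [Finset.sum_const, Finset.card_range, nsmul_eq_mul,
          ENNReal.ofReal_mul (Nat.cast_nonneg _), ENNReal.ofReal_natCast]
    _ ≤ ENNReal.ofReal (5 * (a * l)) := by
        apply ENNReal.ofReal_le_ofReal
        calc (K : ℝ) * a ≤ 5 * l * a := by gcongr
          _ = _ := by ring
    _ = _ := by rw [ENNReal.ofReal_mul (by norm_num)]; simp

lemma log_le_sum_indicator {a : ℝ} (ha : 0 ≤ a) (k₀ : ℕ) :
    ENNReal.ofReal (a * Real.log (Real.exp 1 + a)) ≤ (k₀ + 2 : ℕ) * ENNReal.ofReal a +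
      ∑' j : ℕ, {b : ℝ≥0∞ | 2 ^ (k₀ + j) < b}.indicator id (ENNReal.ofReal a) := by
  classical
  have hex : ∃ J : ℕ, a ≤ 2 ^ (k₀ + J) := by
    obtain ⟨J, hJ⟩ := pow_unbounded_of_one_lt a (show (1 : ℝ) < 2 by norm_num)
    exact ⟨J, hJ.le.trans (pow_le_pow_right₀ (by norm_num) (by omega))⟩
  have hJ := Nat.find_spec hex
  have hmin : ∀ j < Nat.find hex, (2 : ℝ) ^ (k₀ + j) < a := fun j hj =>
    not_le.1 (Nat.find_min hex hj)
  set J := Nat.find hex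
  have hsum : (J : ℝ≥0∞) * ENNReal.ofReal a
      ≤ ∑' j : ℕ, {b : ℝ≥0∞ | 2 ^ (k₀ + j) < b}.indicator id (ENNReal.ofReal a) := by
    refine le_trans (le_of_eq ?_) (ENNReal.sum_le_tsum (Finset.range J))
    rw [Finset.sum_congr rfl fun j hj => indicator_of_mem
      (show ENNReal.ofReal a ∈ {b : ℝ≥0∞ | 2 ^ (k₀ + j) < b} from
        (pow_lt_ofReal _ _).2 (hmin j (Finset.mem_range.1 hj))) id]
    simp
  have hlog : Real.log (Real.exp 1 + a) ≤ ((k₀ + 2 : ℕ) : ℝ) + J := by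
    have h1 : (1 : ℝ) ≤ 2 ^ (k₀ + J) := one_le_pow₀ (by norm_num)
    have h2 : Real.exp 1 + a ≤ 2 ^ (k₀ + J + 2) := by
      have h3 : (2 : ℝ) ^ (k₀ + J + 2) = 4 * 2 ^ (k₀ + J) := by ring
      have := Real.exp_one_lt_d9
      rw [h3]
      linarith
    have h4 : Real.log (Real.exp 1 + a) ≤ (k₀ + J + 2 : ℕ) * Real.log 2 := by
      rw [← Real.log_pow]
      exact Real.log_le_log (by positivity) h2
    have h5 : Real.log 2 ≤ 1 := by linarith [Real.log_two_lt_d9]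
    have h6 : ((k₀ + J + 2 : ℕ) : ℝ) * Real.log 2 ≤ (k₀ + J + 2 : ℕ) * 1 := by gcongr
    push_cast at h4 h6 ⊢
    linarith
  calc ENNReal.ofReal (a * Real.log (Real.exp 1 + a))
      ≤ ENNReal.ofReal ((((k₀ + 2 : ℕ) : ℝ) + J) * a) := by
        apply ENNReal.ofReal_le_ofReal
        rw [mul_comm]
        gcongr
    _ = (k₀ + 2 : ℕ) * ENNReal.ofReal a + J * ENNReal.ofReal a := by
        rw [add_mul, ENNReal.ofReal_add (by positivity) (by positivity),
          ENNReal.ofReal_mul (by positivity), ENNReal.ofReal_mul (by positivity),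
          ENNReal.ofReal_natCast, ENNReal.ofReal_natCast]
    _ ≤ _ := by gcongr

/-! ### Integrability of the maximal function and the Zygmund class -/

section
variable {Q0 : Cube n} {f : (Fin n → ℝ) → ℝ} {c : ℝ}

lemma aemeasurable_indicator_enorm (hf : IntegrableOn f Q0.toSet) {s : Set ℝ≥0∞}
    (hs : MeasurableSet s) :
    AEMeasurable (fun x => s.indicator id ‖f x - c‖ₑ) (volume.restrict Q0.toSet) :=
  (measurable_id.indicator hs).comp_aemeasurable (integrableOn_sub hf c).aestronglyMeasurable.enorm

lemma lintegral_lvl_sum :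
    ∫⁻ x in Q0.toSet, ∑' k : ℕ,
        (if (2 : ℝ≥0∞) ^ k < mx Q0 f c x then (2 : ℝ≥0∞) ^ k else 0)
      = ∑' k : ℕ, 2 ^ k * volume (lvl Q0 f c (2 ^ k)) := by
  rw [← lintegral_tsum_indicator (Q0 := Q0) (fun k : ℕ => lvl Q0 f c (2 ^ k))
    (fun k => lvl_weak.1) (fun k => lvl_subset) (fun k => 2 ^ k)]
  refine setLIntegral_congr_fun (measurableSet_toSet Q0) fun x hx => tsum_congr fun k => ?_
  classical
  rw [indicator_apply]
  simp only [lvl, mem_ofPred_eq, hx, true_and]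

lemma mx_finite_of_log (hf : IntegrableOn f Q0.toSet)
    (h : ∫⁻ x in Q0.toSet, ENNReal.ofReal
      (|f x - c| * Real.log (Real.exp 1 + |f x - c|)) < ∞) :
    ∫⁻ x in Q0.toSet, mx Q0 f c x < ∞ := by
  have hm : ∀ k : ℕ, AEMeasurable (fun x =>
      {a : ℝ≥0∞ | 2 ^ k < 2 * a}.indicator id ‖f x - c‖ₑ) (volume.restrict Q0.toSet) :=
    fun k => aemeasurable_indicator_enorm hf
      (measurableSet_lt measurable_const (measurable_id.const_mul _))
  calc ∫⁻ x in Q0.toSet, mx Q0 f c x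
      ≤ ∫⁻ x in Q0.toSet, (1 + ∑' k : ℕ,
          (if (2 : ℝ≥0∞) ^ k < mx Q0 f c x then (2 : ℝ≥0∞) ^ k else 0)) :=
        lintegral_mono fun x => le_one_add_sum_pow_indicator _
    _ = Q0.vol + ∑' k : ℕ, 2 ^ k * volume (lvl Q0 f c (2 ^ k)) := by
        rw [lintegral_add_left measurable_const, lintegral_lvl_sum, setLIntegral_const, one_mul]
        rfl
    _ ≤ Q0.vol + ∑' k : ℕ, 2 * ∫⁻ x in Q0.toSet,
          {a : ℝ≥0∞ | 2 ^ k < 2 * a}.indicator id ‖f x - c‖ₑ :=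
        add_le_add le_rfl (ENNReal.tsum_le_tsum fun k => lvl_weak_trunc (by simp))
    _ = Q0.vol + 2 * ∫⁻ x in Q0.toSet, ∑' k : ℕ,
          {a : ℝ≥0∞ | 2 ^ k < 2 * a}.indicator id ‖f x - c‖ₑ := by
        rw [ENNReal.tsum_mul_left, lintegral_tsum hm]
    _ ≤ Q0.vol + 2 * ∫⁻ x in Q0.toSet, 5 * ENNReal.ofReal
          (|f x - c| * Real.log (Real.exp 1 + |f x - c|)) := by
        gcongr with x
        rw [Real.enorm_eq_ofReal_abs]
        exact sum_indicator_le_log (abs_nonneg _)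
    _ < ∞ := by
        rw [lintegral_const_mul' _ _ (by simp)]
        exact ENNReal.add_lt_top.2 ⟨(vol_ne_top Q0).lt_top,
          ENNReal.mul_lt_top (by simp) (ENNReal.mul_lt_top (by simp) h)⟩

lemma log_finite_of_mx (hf : IntegrableOn f Q0.toSet)
    (h : ∫⁻ x in Q0.toSet, mx Q0 f c x < ∞) :
    ∫⁻ x in Q0.toSet, ENNReal.ofReal
      (|f x - c| * Real.log (Real.exp 1 + |f x - c|)) < ∞ := by
  obtain ⟨k₀, hk⟩ := ENNReal.exists_nat_gt (av_ne_top hf c)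
  have hk₀ : ∀ j, av Q0 f c ≤ 2 ^ (k₀ + j) := fun j => by
    have h1 : (k₀ : ℝ≥0∞) ≤ 2 ^ k₀ := by exact_mod_cast k₀.lt_two_pow_self.le
    exact (hk.le.trans h1).trans (pow_le_pow_right₀ (by norm_num) (by omega))
  have hm : ∀ j : ℕ, AEMeasurable (fun x =>
      {b : ℝ≥0∞ | 2 ^ (k₀ + j) < b}.indicator id ‖f x - c‖ₑ) (volume.restrict Q0.toSet) :=
    fun j => aemeasurable_indicator_enorm hf measurableSet_Ioi
  calc ∫⁻ x in Q0.toSet, ENNReal.ofReal (|f x - c| * Real.log (Real.exp 1 + |f x - c|))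
      ≤ ∫⁻ x in Q0.toSet, ((k₀ + 2 : ℕ) * ‖f x - c‖ₑ +
          ∑' j : ℕ, {b : ℝ≥0∞ | 2 ^ (k₀ + j) < b}.indicator id ‖f x - c‖ₑ) := by
        refine lintegral_mono fun x => ?_
        rw [Real.enorm_eq_ofReal_abs]
        exact log_le_sum_indicator (abs_nonneg _) k₀
    _ = (k₀ + 2 : ℕ) * (∫⁻ x in Q0.toSet, ‖f x - c‖ₑ) +
          ∑' j : ℕ, ∫⁻ x in Q0.toSet,
            {b : ℝ≥0∞ | 2 ^ (k₀ + j) < b}.indicator id ‖f x - c‖ₑ := by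
        rw [lintegral_add_left'
          ((integrableOn_sub hf c).aestronglyMeasurable.enorm.const_mul _),
          lintegral_const_mul' _ _ (by simp), lintegral_tsum hm]
    _ ≤ (k₀ + 2 : ℕ) * (∫⁻ x in Q0.toSet, ‖f x - c‖ₑ) +
          ∑' j : ℕ, 2 ^ n * (2 ^ (k₀ + j) * volume (lvl Q0 f c (2 ^ (k₀ + j)))) := by
        refine add_le_add le_rfl (ENNReal.tsum_le_tsum fun j => ?_)
        rw [← mul_assoc]
        exact lintegral_large_le hf (hk₀ j)
    _ ≤ (k₀ + 2 : ℕ) * (∫⁻ x in Q0.toSet, ‖f x - c‖ₑ) +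
          2 ^ n * ∑' k : ℕ, 2 ^ k * volume (lvl Q0 f c (2 ^ k)) := by
        rw [ENNReal.tsum_mul_left]
        refine add_le_add le_rfl (mul_le_mul' le_rfl ?_)
        exact ENNReal.tsum_comp_le_tsum_of_injective (add_right_injective k₀)
          (fun k => 2 ^ k * volume (lvl Q0 f c (2 ^ k)))
    _ ≤ (k₀ + 2 : ℕ) * (∫⁻ x in Q0.toSet, ‖f x - c‖ₑ) +
          2 ^ n * (2 * ∫⁻ x in Q0.toSet, mx Q0 f c x) := by
        refine add_le_add le_rfl (mul_le_mul' le_rfl ?_)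
        rw [← lintegral_lvl_sum, ← lintegral_const_mul' _ _ (by simp)]
        exact lintegral_mono fun x => sum_pow_indicator_le _
    _ < ∞ := ENNReal.add_lt_top.2
        ⟨ENNReal.mul_lt_top (by simp) (lintegral_enorm_ne_top hf c).lt_top,
          ENNReal.mul_lt_top (ENNReal.pow_lt_top (by simp))
            (ENNReal.mul_lt_top (by simp) h)⟩

end

/-- `SJN_1(Q0)` coincides (modulo constants) with the Zygmund class `L(log L)(Q0)`:
`‖f‖_{SJN_1(Q0)} < ∞` iff `∫_{Q0}|f − f_{Q0}| log(e + |f − f_{Q0}|) < ∞`; moreover,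
up to constants depending only on `n`, `‖f‖_{SJN_1(Q0)} ≈ ‖M_{Q0}(f − f_{Q0})‖_{L¹(Q0)}`,
where `M_{Q0}` is the local dyadic Hardy–Littlewood maximal operator. -/
theorem statement10 {n : ℕ} (hn : 0 < n) :
    ∃ c : ℝ≥0∞, c ≠ 0 ∧ c ≠ ∞ ∧
      ∀ (Q0 : Cube n) (f : (Fin n → ℝ) → ℝ), IntegrableOn f Q0.toSet volume →
        (sjnNorm Q0 1 f < ∞ ↔
          (∫⁻ x in Q0.toSet,
            ENNReal.ofReal (|f x - cubeAvg Q0 f| *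
              Real.log (Real.exp 1 + |f x - cubeAvg Q0 f|))) < ∞) ∧
        c⁻¹ * (∫⁻ x in Q0.toSet, fracMax Q0 1 0 (fun y => f y - cubeAvg Q0 f) x)
            ≤ sjnNorm Q0 1 f ∧
        sjnNorm Q0 1 f ≤
          c * ∫⁻ x in Q0.toSet, fracMax Q0 1 0 (fun y => f y - cubeAvg Q0 f) x := by
  refine ⟨2 ^ (n + 2), by simp, by simp, fun Q0 f hf => ?_⟩
  rw [lintegral_fracMax]
  have h1 := sjnNorm_le hn hf (cubeAvg Q0 f)
  have h2 := lintegral_mx_le hn hf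
  refine ⟨⟨fun h => log_finite_of_mx hf ?_, fun h => ?_⟩, ?_, h1.trans ?_⟩
  · exact h2.trans_lt (ENNReal.mul_lt_top (by simp) h)
  · exact h1.trans_lt (ENNReal.mul_lt_top (by simp) (mx_finite_of_log hf h))
  · rw [mul_comm, ← ENNReal.div_eq_inv_mul.trans (mul_comm _ _),
      ENNReal.div_le_iff_le_mul (by simp) (by simp), mul_comm]
    exact h2
  · gcongr
    calc (2 : ℝ≥0∞) = 2 ^ 1 := (pow_one 2).symm
      _ ≤ 2 ^ (n + 2) := pow_le_pow_right₀ (by norm_num) (by omega)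

end SparseBrudnyi
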